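/- Assume there exists at least one generalized pairwise valid rate assignment. Then the set of feasible pairing schemes is nonempty, and the set { Σ_{i : Fin n} Q i (R i) : R generalized pairwise valid } has a least element, equal to the minimum of cost(f) over the (finitely many) feasible pairing schemes f. -/

import Mathlib

open MeasureTheory ProbabilityTheory

/-- Shannon entropy (in nats) of a random variable. -/
noncomputable def shEntropy {Ω : Type*} [MeasurableSpace Ω] {S : Type*}
    (μ : Measure Ω) (X : Ω → S) : ℝ :=
  ∑' x : S, Real.negMulLog (μ (X ⁻¹' {x})).toReal

/-- Conditional Shannon entropy `H[X | Y]`. -/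
noncomputable def shCondEntropy {Ω : Type*} [MeasurableSpace Ω] {S T : Type*}
    (μ : Measure Ω) (X : Ω → S) (Y : Ω → T) : ℝ :=
  ∑' y : T, (μ (Y ⁻¹' {y})).toReal * shEntropy (ProbabilityTheory.cond μ (Y ⁻¹' {y})) X

/-- The power needed at node `i` (channel gain `γ i`) to support rate `r` (in nats). -/
noncomputable def Qpow {n : ℕ} (γ : Fin n → ℝ) (i : Fin n) (r : ℝ) : ℝ :=
  (Real.exp r - 1) / γ i

/-- The two-dimensional Slepian-Wolf region of the pair of sources `X i`, `X j`. -/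
def SWregion {Ω S : Type*} [MeasurableSpace Ω] {n : ℕ}
    (μ : Measure Ω) (X : Fin n → Ω → S) (i j : Fin n) : Set (ℝ × ℝ) :=
  {q : ℝ × ℝ | q.1 ≥ shCondEntropy μ (X i) (X j) ∧ q.2 ≥ shCondEntropy μ (X j) (X i) ∧
    q.1 + q.2 ≥ shEntropy μ (fun ω => (X i ω, X j ω))}

/-- The Slepian-Wolf region intersected with the peak power constraints. -/
def Sregion {Ω S : Type*} [MeasurableSpace Ω] {n : ℕ}
    (μ : Measure Ω) (X : Fin n → Ω → S) (γ : Fin n → ℝ) (Pmax : ℝ)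
    (i j : Fin n) : Set (ℝ × ℝ) :=
  {q : ℝ × ℝ | q ∈ SWregion μ X i j ∧ Qpow γ i q.1 ≤ Pmax ∧ Qpow γ j q.2 ≤ Pmax}

/-- `X i` is initially decodable under `R` if `R i ≥ H[X i]`, or together with some
other source `X j` the rate pair `(R i, R j)` lies in their Slepian-Wolf region. -/
def InitiallyDecodable {Ω S : Type*} [MeasurableSpace Ω] {n : ℕ}
    (μ : Measure Ω) (X : Fin n → Ω → S) (R : Fin n → ℝ) (i : Fin n) : Prop :=
  R i ≥ shEntropy μ (X i) ∨ ∃ j : Fin n, j ≠ i ∧ (R i, R j) ∈ SWregion μ X i j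

/-- The generalized pairwise property: each source is initially decodable, or is
decodable via a chain of sources starting from an initially decodable one. -/
def GenPairwiseProperty {Ω S : Type*} [MeasurableSpace Ω] {n : ℕ}
    (μ : Measure Ω) (X : Fin n → Ω → S) (R : Fin n → ℝ) : Prop :=
  ∀ i : Fin n, InitiallyDecodable μ X R i ∨
    ∃ (k : ℕ) (s : ℕ → Fin n), 1 ≤ k ∧
      InitiallyDecodable μ X R (s 1) ∧
      (∀ j : ℕ, 2 ≤ j → j ≤ k → R (s j) ≥ shCondEntropy μ (X (s j)) (X (s (j - 1)))) ∧
      R i ≥ shCondEntropy μ (X i) (X (s k))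

/-- A rate assignment is generalized pairwise valid if it satisfies the generalized
pairwise property and every node meets the peak power constraint. -/
def GenPairwiseValid {Ω S : Type*} [MeasurableSpace Ω] {n : ℕ}
    (μ : Measure Ω) (X : Fin n → Ω → S) (γ : Fin n → ℝ) (Pmax : ℝ)
    (R : Fin n → ℝ) : Prop :=
  GenPairwiseProperty μ X R ∧ ∀ i : Fin n, Qpow γ i (R i) ≤ Pmax

/-- The decoding relation of a rate assignment: `a` can help decode `b` if
`H[X b | X a] ≤ R b`. -/
def decRel {Ω S : Type*} [MeasurableSpace Ω] {n : ℕ}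
    (μ : Measure Ω) (X : Fin n → Ω → S) (R : Fin n → ℝ) : Fin n → Fin n → Prop :=
  fun a b => shCondEntropy μ (X b) (X a) ≤ R b

/-- The mode of a node in a pairing scheme: a root (transmitting at full entropy),
a child of some node `j` (transmitting at conditional entropy given `X j`), or
matched with some node `j` (jointly decoded with `X j`). -/
inductive PairMode (n : ℕ) where
  | root : PairMode n
  | child (j : Fin n) : PairMode n
  | matched (j : Fin n) : PairMode n
deriving DecidableEq

/-- A pairing scheme: each node is a root, a child of another node, or matched with
another node; matching is symmetric, no two nodes are children of each other, and the
associated undirected graph is acyclic. -/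
structure PairingScheme (n : ℕ) where
  mode : Fin n → PairMode n
  child_ne : ∀ i j : Fin n, mode i = PairMode.child j → j ≠ i
  matched_ne : ∀ i j : Fin n, mode i = PairMode.matched j → j ≠ i
  matched_symm : ∀ i j : Fin n, mode i = PairMode.matched j ↔ mode j = PairMode.matched i
  no_mutual_child : ∀ i j : Fin n, i ≠ j →
    ¬(mode i = PairMode.child j ∧ mode j = PairMode.child i)
  acyclic : (SimpleGraph.fromRel fun i j =>
    mode i = PairMode.matched j ∨ mode i = PairMode.child j ∨
      mode j = PairMode.child i).IsAcyclic

/-- A pairing scheme is feasible if all the prescribed transmissions can be realized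
within the peak power constraint. -/
def PairingScheme.Feasible {Ω S : Type*} [MeasurableSpace Ω] {n : ℕ}
    (f : PairingScheme n) (μ : Measure Ω) (X : Fin n → Ω → S) (γ : Fin n → ℝ)
    (Pmax : ℝ) : Prop :=
  (∀ i : Fin n, f.mode i = PairMode.root → Qpow γ i (shEntropy μ (X i)) ≤ Pmax) ∧
  (∀ i j : Fin n, f.mode i = PairMode.child j →
    Qpow γ i (shCondEntropy μ (X i) (X j)) ≤ Pmax) ∧
  (∀ i j : Fin n, f.mode i = PairMode.matched j →
    (Sregion μ X γ Pmax i j).Nonempty)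

/-- The minimum sum power of a jointly decoded pair `(i, j)`. -/
noncomputable def pairPower {Ω S : Type*} [MeasurableSpace Ω] {n : ℕ}
    (μ : Measure Ω) (X : Fin n → Ω → S) (γ : Fin n → ℝ) (Pmax : ℝ)
    (i j : Fin n) : ℝ :=
  sInf {x : ℝ | ∃ a b : ℝ, (a, b) ∈ Sregion μ X γ Pmax i j ∧ x = Qpow γ i a + Qpow γ j b}

/-- The power contribution of node `i` in a pairing scheme; each member of a matched
pair contributes half of the pair power, so that the pair is counted once in total. -/
noncomputable def schemeContrib {Ω S : Type*} [MeasurableSpace Ω] {n : ℕ}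
    (μ : Measure Ω) (X : Fin n → Ω → S) (γ : Fin n → ℝ) (Pmax : ℝ)
    (f : PairingScheme n) (i : Fin n) : ℝ :=
  match f.mode i with
  | PairMode.root => Qpow γ i (shEntropy μ (X i))
  | PairMode.child j => Qpow γ i (shCondEntropy μ (X i) (X j))
  | PairMode.matched j => (1 / 2) * pairPower μ X γ Pmax i j

/-- The total cost (sum power) of a feasible pairing scheme: roots contribute the power
of their entropy, children the power of their conditional entropy, and each matched
pair (counted once) its minimum sum power. -/
noncomputable def schemeCost {Ω S : Type*} [MeasurableSpace Ω] {n : ℕ}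
    (μ : Measure Ω) (X : Fin n → Ω → S) (γ : Fin n → ℝ) (Pmax : ℝ)
    (f : PairingScheme n) : ℝ :=
  ∑ i : Fin n, schemeContrib μ X γ Pmax f i

lemma acyclic_of_rank {V : Type*} (G : SimpleGraph V) (d : V → ℕ)
    (h : ∀ v a b, G.Adj v a → G.Adj v b → d a ≤ d v → d b ≤ d v → a = b) : G.IsAcyclic := by
  classical
  intro v c hc
  obtain ⟨u, hu, hmax⟩ := c.support.toFinset.exists_max_image d ⟨v, by simp⟩
  have hu' : u ∈ c.support := by simpa using hu
  have hc' : (c.rotate u hu').IsCycle := hc.rotate hu'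
  have hm : ∀ x ∈ (c.rotate u hu').support, d x ≤ d u := by
    intro x hx
    apply hmax
    simpa using hx
  apply hc'.snd_ne_penultimate
  apply h u
  · exact SimpleGraph.Walk.adj_snd hc'.not_nil
  · exact (SimpleGraph.Walk.adj_penultimate hc'.not_nil).symm
  · exact hm _ (SimpleGraph.Walk.getVert_mem_support _ _)
  · exact hm _ (SimpleGraph.Walk.getVert_mem_support _ _)

/-- Parent pointer of a pairing scheme. -/
def PairingScheme.par {n : ℕ} (f : PairingScheme n) (i : Fin n) : Fin n :=
  match f.mode i with
  | PairMode.child j => j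
  | _ => i

/-- Partner involution of a pairing scheme. -/
def PairingScheme.partner {n : ℕ} (f : PairingScheme n) (i : Fin n) : Fin n :=
  match f.mode i with
  | PairMode.matched j => j
  | _ => i

lemma PairingScheme.partner_invol {n : ℕ} (f : PairingScheme n) :
    Function.Involutive f.partner := by
  intro i
  cases h : f.mode i with
  | root => simp [PairingScheme.partner, h]
  | child j => simp [PairingScheme.partner, h]
  | matched j =>
    have h2 := (f.matched_symm i j).1 h
    simp [PairingScheme.partner, h, h2]

lemma PairingScheme.exists_end {n : ℕ} (f : PairingScheme n) (i : Fin n) :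
    ∃ k, ∀ j, f.mode (f.par^[k] i) ≠ PairMode.child j := by
  by_contra hcon
  push Not at hcon
  set G := (SimpleGraph.fromRel fun i j =>
    f.mode i = PairMode.matched j ∨ f.mode i = PairMode.child j ∨
      f.mode j = PairMode.child i) with hG
  have key : ∀ (k : ℕ) (i : Fin n), (∀ k, ∃ j, f.mode (f.par^[k] i) = PairMode.child j) →
      ∃ (v : Fin n) (w : G.Walk i v), w.length = k ∧ List.IsChain (· ≠ ·) w.edges ∧
        ∀ e ∈ w.edges.head?, e = s(i, f.par i) := by
    intro k
    induction k with
    | zero => intro i _; exact ⟨i, SimpleGraph.Walk.nil, by simp⟩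
    | succ k ih =>
      intro i hi
      obtain ⟨v, w, hw, hch, hhd⟩ := ih (f.par i) (fun k => hi (k + 1))
      obtain ⟨j, hj⟩ := hi 0
      obtain ⟨j', hj'⟩ := hi 1
      simp only [Function.iterate_zero, id, Function.iterate_one] at hj hj'
      have hp : f.par i = j := by simp [PairingScheme.par, hj]
      have hp' : f.par (f.par i) = j' := by rw [PairingScheme.par, hj']
      have hne := f.child_ne _ _ hj
      have hadj : G.Adj i (f.par i) := by
        rw [hG, SimpleGraph.fromRel_adj, hp]
        exact ⟨hne.symm, Or.inl (Or.inr (Or.inl hj))⟩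
      refine ⟨v, SimpleGraph.Walk.cons hadj w, by simp [hw], ?_, ?_⟩
      · rw [SimpleGraph.Walk.edges_cons, List.isChain_cons]
        refine ⟨?_, hch⟩
        intro y hy
        rw [hhd y hy, hp']
        intro heq
        have h1 : j' = i := by
          rw [hp] at heq
          rcases Sym2.eq_iff.1 heq with h | h
          · exact absurd h.1.symm hne
          · exact h.1.symm
        rw [hp, h1] at hj'
        exact f.no_mutual_child i j hne.symm ⟨hj, hj'⟩
      · simp
  obtain ⟨v, w, hw, hch, _⟩ := key n i hcon
  have hpath := (SimpleGraph.IsAcyclic.isPath_iff_isChain f.acyclic w).2 hch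
  have := hpath.length_lt
  simp [hw] at this

lemma Qpow_mono {n : ℕ} {γ : Fin n → ℝ} (hγ : ∀ i, 0 < γ i) (i : Fin n) {a b : ℝ}
    (h : a ≤ b) : Qpow γ i a ≤ Qpow γ i b := by
  unfold Qpow
  have := Real.exp_le_exp.2 h
  have := hγ i
  gcongr

lemma Qpow_cont {n : ℕ} (γ : Fin n → ℝ) (i : Fin n) : Continuous (Qpow γ i) := by
  unfold Qpow
  fun_prop

lemma Qpow_bdd {n : ℕ} {γ : Fin n → ℝ} (hγ : ∀ i, 0 < γ i) (i : Fin n) {a P : ℝ}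
    (h : Qpow γ i a ≤ P) : a ≤ P * γ i := by
  unfold Qpow at h
  rw [div_le_iff₀ (hγ i)] at h
  have := Real.add_one_le_exp a
  linarith

section
variable {Ω S : Type*} [MeasurableSpace Ω] {n : ℕ} (μ : Measure Ω) (X : Fin n → Ω → S)
  (γ : Fin n → ℝ) (Pmax : ℝ)

lemma joint_symm (i j : Fin n) :
    shEntropy μ (fun ω => (X i ω, X j ω)) = shEntropy μ (fun ω => (X j ω, X i ω)) := by
  unfold shEntropy
  rw [← (Equiv.prodComm S S).tsum_eq]
  congr 1
  ext ⟨a, b⟩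
  congr 3
  ext ω
  simp [and_comm]

lemma SW_swap {i j : Fin n} {a b : ℝ} (h : (a, b) ∈ SWregion μ X i j) :
    (b, a) ∈ SWregion μ X j i := by
  obtain ⟨h1, h2, h3⟩ := h
  refine ⟨h2, h1, ?_⟩
  rw [joint_symm]
  simp only at h3 ⊢
  linarith

lemma S_swap {i j : Fin n} {a b : ℝ} (h : (a, b) ∈ Sregion μ X γ Pmax i j) :
    (b, a) ∈ Sregion μ X γ Pmax j i :=
  ⟨SW_swap μ X h.1, h.2.2, h.2.1⟩

lemma pairPower_symm (i j : Fin n) : pairPower μ X γ Pmax i j = pairPower μ X γ Pmax j i := by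
  unfold pairPower
  congr 1
  ext x
  constructor
  · rintro ⟨a, b, h, rfl⟩
    exact ⟨b, a, S_swap μ X γ Pmax h, add_comm _ _⟩
  · rintro ⟨a, b, h, rfl⟩
    exact ⟨b, a, S_swap μ X γ Pmax h, add_comm _ _⟩

lemma S_compact (hγ : ∀ i, 0 < γ i) (i j : Fin n) : IsCompact (Sregion μ X γ Pmax i j) := by
  have hc : IsCompact ((Set.Icc (shCondEntropy μ (X i) (X j)) (Pmax * γ i)) ×ˢ
    (Set.Icc (shCondEntropy μ (X j) (X i)) (Pmax * γ j))) := isCompact_Icc.prod isCompact_Icc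
  refine hc.of_isClosed_subset ?_ ?_
  · have h1 : Continuous fun q : ℝ × ℝ => Qpow γ i q.1 := (Qpow_cont γ i).comp continuous_fst
    have h2 : Continuous fun q : ℝ × ℝ => Qpow γ j q.2 := (Qpow_cont γ j).comp continuous_snd
    exact ((isClosed_le continuous_const continuous_fst).inter
      ((isClosed_le continuous_const continuous_snd).inter
        (isClosed_le continuous_const (continuous_fst.add continuous_snd)))).inter
      ((isClosed_le h1 continuous_const).inter (isClosed_le h2 continuous_const))
  · rintro ⟨a, b⟩ ⟨⟨h1, h2, _⟩, h3, h4⟩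
    exact ⟨⟨h1, Qpow_bdd hγ i h3⟩, ⟨h2, Qpow_bdd hγ j h4⟩⟩

lemma pairPower_attained (hγ : ∀ i, 0 < γ i) (i j : Fin n)
    (hne : (Sregion μ X γ Pmax i j).Nonempty) :
    ∃ q ∈ Sregion μ X γ Pmax i j,
      pairPower μ X γ Pmax i j = Qpow γ i q.1 + Qpow γ j q.2 ∧
      ∀ q' ∈ Sregion μ X γ Pmax i j, pairPower μ X γ Pmax i j ≤ Qpow γ i q'.1 + Qpow γ j q'.2 := by
  have h1 : Continuous fun q : ℝ × ℝ => Qpow γ i q.1 := (Qpow_cont γ i).comp continuous_fst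
  have h2 : Continuous fun q : ℝ × ℝ => Qpow γ j q.2 := (Qpow_cont γ j).comp continuous_snd
  obtain ⟨q, hq, hmin⟩ := (S_compact μ X γ Pmax hγ i j).exists_isMinOn hne
    (h1.add h2).continuousOn
  have hl : IsLeast {x : ℝ | ∃ a b : ℝ, (a, b) ∈ Sregion μ X γ Pmax i j ∧
      x = Qpow γ i a + Qpow γ j b} (Qpow γ i q.1 + Qpow γ j q.2) := by
    refine ⟨⟨q.1, q.2, hq, rfl⟩, ?_⟩
    rintro x ⟨a, b, h, rfl⟩
    exact hmin h
  have he : pairPower μ X γ Pmax i j = Qpow γ i q.1 + Qpow γ j q.2 := hl.csInf_eq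
  refine ⟨q, hq, he, ?_⟩
  intro q' hq'
  rw [he]
  exact hmin hq'

lemma sum_half (σ : Fin n → Fin n) (hσ : Function.Involutive σ) (q : Fin n → ℝ) :
    ∑ i, (1 / 2) * (q i + q (σ i)) = ∑ i, q i := by
  rw [← Finset.mul_sum, Finset.sum_add_distrib]
  have := Equiv.sum_comp (hσ.toPerm) q
  simp only [Function.Involutive.coe_toPerm] at this
  rw [this]; ring

lemma valid_of_feasible (hγ : ∀ i, 0 < γ i) (f : PairingScheme n)
    (hf : f.Feasible μ X γ Pmax) :
    ∃ R, GenPairwiseValid μ X γ Pmax R ∧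
      schemeCost μ X γ Pmax f = ∑ i, Qpow γ i (R i) := by
  have hopt : ∀ i j, ∃ q : ℝ × ℝ, (Sregion μ X γ Pmax i j).Nonempty →
      q ∈ Sregion μ X γ Pmax i j ∧
      pairPower μ X γ Pmax i j = Qpow γ i q.1 + Qpow γ j q.2 := by
    intro i j
    by_cases h : (Sregion μ X γ Pmax i j).Nonempty
    · obtain ⟨q, h1, h2, _⟩ := pairPower_attained μ X γ Pmax hγ i j h
      exact ⟨q, fun _ => ⟨h1, h2⟩⟩
    · exact ⟨0, fun h' => absurd h' h⟩
  choose opt hopt using hopt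
  let R : Fin n → ℝ := fun i => match f.mode i with
    | PairMode.root => shEntropy μ (X i)
    | PairMode.child j => shCondEntropy μ (X i) (X j)
    | PairMode.matched j => if i < j then (opt i j).1 else (opt j i).2
  have hroot : ∀ i, f.mode i = PairMode.root → R i = shEntropy μ (X i) := by
    intro i h; simp [R, h]
  have hchild : ∀ i j, f.mode i = PairMode.child j → R i = shCondEntropy μ (X i) (X j) := by
    intro i j h; simp [R, h]
  have hmatch : ∀ i j, f.mode i = PairMode.matched j → (R i, R j) ∈ Sregion μ X γ Pmax i j ∧
      pairPower μ X γ Pmax i j = Qpow γ i (R i) + Qpow γ j (R j) := by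
    intro i j h
    have h' := (f.matched_symm i j).1 h
    have hne := f.matched_ne i j h
    rcases lt_or_gt_of_ne hne with hlt | hlt
    · have e1 : R i = (opt j i).2 := by simp [R, h, hlt.not_gt]
      have e2 : R j = (opt j i).1 := by simp [R, h', hlt]
      obtain ⟨a, b⟩ := hopt j i (hf.2.2 j i h')
      rw [e1, e2]
      refine ⟨S_swap μ X γ Pmax a, ?_⟩
      rw [pairPower_symm, b, add_comm]
    · have e1 : R i = (opt i j).1 := by simp [R, h, hlt]
      have e2 : R j = (opt i j).2 := by simp [R, h', hlt.not_gt]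
      obtain ⟨a, b⟩ := hopt i j (hf.2.2 i j h)
      rw [e1, e2]
      exact ⟨a, b⟩
  have hinit : ∀ i, (∀ j, f.mode i ≠ PairMode.child j) → InitiallyDecodable μ X R i := by
    intro i hi
    cases h : f.mode i with
    | root => exact Or.inl (hroot i h).ge
    | child j => exact absurd h (hi j)
    | matched j => exact Or.inr ⟨j, f.matched_ne i j h, (hmatch i j h).1.1⟩
  refine ⟨R, ⟨?_, ?_⟩, ?_⟩
  · intro i
    classical
    have hE := f.exists_end i
    by_cases h0 : ∀ j, f.mode i ≠ PairMode.child j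
    · exact Or.inl (hinit i h0)
    right
    have hcond : ∀ m, m < Nat.find hE →
        R (f.par^[m] i) ≥ shCondEntropy μ (X (f.par^[m] i)) (X (f.par^[m + 1] i)) := by
      intro m hm
      have := Nat.find_min hE hm
      push Not at this
      obtain ⟨j, hj⟩ := this
      rw [hchild _ _ hj, Function.iterate_succ_apply']
      have : f.par (f.par^[m] i) = j := by simp [PairingScheme.par, hj]
      rw [this]
    have hpos : 1 ≤ Nat.find hE := by
      rw [Nat.succ_le_iff, Nat.find_pos]
      exact h0
    refine ⟨Nat.find hE, fun j => f.par^[Nat.find hE + 1 - j] i, hpos, ?_, ?_, ?_⟩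
    · simpa using hinit _ (Nat.find_spec hE)
    · intro j h2 hk
      have := hcond (Nat.find hE + 1 - j) (by omega)
      have e : Nat.find hE + 1 - (j - 1) = Nat.find hE + 1 - j + 1 := by omega
      simp only [e]
      exact this
    · have := hcond 0 (by omega)
      simpa using this
  · intro i
    cases h : f.mode i with
    | root => rw [hroot i h]; exact hf.1 i h
    | child j => rw [hchild i j h]; exact hf.2.1 i j h
    | matched j => exact (hmatch i j h).1.2.1
  · rw [← sum_half f.partner f.partner_invol (fun i => Qpow γ i (R i))]
    unfold schemeCost
    refine Finset.sum_congr rfl fun i _ => ?_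
    unfold schemeContrib
    cases h : f.mode i with
    | root => simp only [PairingScheme.partner, h, hroot i h]; ring
    | child j => simp only [PairingScheme.partner, h, hchild i j h]; ring
    | matched j => simp only [PairingScheme.partner, h, (hmatch i j h).2]

/-- Nodes decodable from the base set within `m` steps. -/
def Lev (R : Fin n → ℝ) (B : Fin n → Prop) : ℕ → Fin n → Prop
  | 0, i => B i
  | m + 1, i => ∃ a, Lev R B m a ∧ shCondEntropy μ (X i) (X a) ≤ R i

lemma exists_matching (r : Fin n → Fin n → Prop) (hr : ∀ i j, r i j → r j i) :
    ∃ σ : Fin n → Fin n, Function.Involutive σ ∧ (∀ i, σ i ≠ i → r i (σ i)) ∧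
      ∀ i j, i ≠ j → σ i = i → σ j = j → ¬ r i j := by
  classical
  let T : Finset (Fin n → Fin n) := Finset.univ.filter fun σ =>
    Function.Involutive σ ∧ (∀ i, σ i ≠ i → r i (σ i))
  obtain ⟨σ, hσ, hmin⟩ := T.exists_min_image
    (fun σ => (Finset.univ.filter fun i => σ i = i).card)
    ⟨id, by
      simp only [T, Finset.mem_filter, Finset.mem_univ, true_and]
      exact ⟨fun _ => rfl, fun i h => absurd rfl h⟩⟩
  simp only [T, Finset.mem_filter, Finset.mem_univ, true_and] at hσ hmin
  refine ⟨σ, hσ.1, hσ.2, ?_⟩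
  intro i j hij hi hj hrij
  let τ : Fin n → Fin n := fun k => if k = i then j else if k = j then i else σ k
  have hinj := hσ.1.injective
  have hτ : Function.Involutive τ ∧ (∀ i, τ i ≠ i → r i (τ i)) := by
    constructor
    · intro k
      have h1 := hσ.1 k
      have h2 : σ k = i → k = i := fun h => hinj (h.trans hi.symm)
      have h3 : σ k = j → k = j := fun h => hinj (h.trans hj.symm)
      simp only [τ]
      grind
    · intro k hk
      have := hσ.2 k
      have := hr _ _ hrij
      simp only [τ] at hk ⊢
      grind
  have := hmin τ hτ
  refine absurd this (not_le.2 (Finset.card_lt_card ?_))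
  rw [Finset.ssubset_iff_of_subset]
  · exact ⟨i, by simp [hi], by simp [τ, hij.symm]⟩
  · intro k
    simp only [Finset.mem_filter, Finset.mem_univ, true_and, τ]
    grind

lemma feasible_of_valid (hγ : ∀ i, 0 < γ i) (R : Fin n → ℝ)
    (hR : GenPairwiseValid μ X γ Pmax R) :
    ∃ f : PairingScheme n, f.Feasible μ X γ Pmax ∧
      schemeCost μ X γ Pmax f ≤ ∑ i, Qpow γ i (R i) := by
  classical
  obtain ⟨hG, hQ⟩ := hR
  obtain ⟨σ, hinv, hσ, hmax⟩ := exists_matching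
    (fun i j => (R i, R j) ∈ SWregion μ X i j) (fun i j h => SW_swap μ X h)
  let B : Fin n → Prop := fun i => σ i ≠ i ∨ R i ≥ shEntropy μ (X i)
  have hI : ∀ i, InitiallyDecodable μ X R i → ∃ m, Lev μ X R B m i := by
    intro i hi
    by_cases hb : B i
    · exact ⟨0, hb⟩
    rcases hi with h | ⟨j, hj, h⟩
    · exact ⟨0, Or.inr h⟩
    · have hjB : B j := by
        left
        intro hjj
        refine hmax i j hj.symm ?_ hjj h
        by_contra h'
        exact hb (Or.inl h')
      exact ⟨1, j, hjB, h.1⟩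
  have hE : ∀ i, ∃ m, Lev μ X R B m i := by
    intro i
    rcases hG i with h | ⟨k, s, hk, h1, hs, hl⟩
    · exact hI i h
    have hind : ∀ j, 1 ≤ j → j ≤ k → ∃ m, Lev μ X R B m (s j) := by
      intro j hj
      induction j, hj using Nat.le_induction with
      | base => intro _; exact hI _ h1
      | succ j hj ih =>
        intro hjk
        obtain ⟨m, hm⟩ := ih (by omega)
        exact ⟨m + 1, s j, hm, hs (j + 1) (by omega) hjk⟩
    obtain ⟨m, hm⟩ := hind k hk le_rfl
    exact ⟨m + 1, s k, hm, hl⟩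
  let d : Fin n → ℕ := fun i => Nat.find (hE i)
  have hd0 : ∀ i, B i → d i = 0 := by
    intro i hi
    exact (Nat.find_eq_zero (hE i)).2 hi
  have hpar : ∀ i, ∃ a, ¬ B i → d a < d i ∧ shCondEntropy μ (X i) (X a) ≤ R i := by
    intro i
    by_cases hb : B i
    · exact ⟨i, fun h => absurd hb h⟩
    have hs := Nat.find_spec (hE i)
    rcases hm : Nat.find (hE i) with _ | m
    · rw [hm] at hs; exact absurd hs hb
    · rw [hm] at hs
      obtain ⟨a, ha, hc⟩ := hs
      refine ⟨a, fun _ => ⟨?_, hc⟩⟩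
      have h1 : d a ≤ m := Nat.find_min' (hE a) ha
      have h2 : d i = m + 1 := hm
      omega
  choose p hp using hpar
  let mode : Fin n → PairMode n := fun i =>
    if σ i ≠ i then PairMode.matched (σ i) else
      if R i ≥ shEntropy μ (X i) then PairMode.root else PairMode.child (p i)
  have hmm : ∀ i j, mode i = PairMode.matched j ↔ σ i ≠ i ∧ σ i = j := by
    intro i j
    simp only [mode]
    split_ifs <;> simp_all
  have hmc : ∀ i j, mode i = PairMode.child j ↔ ¬ B i ∧ p i = j := by
    intro i j
    simp only [mode, B]
    split_ifs <;> simp_all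
  have hmr : ∀ i, mode i = PairMode.root → σ i = i ∧ R i ≥ shEntropy μ (X i) := by
    intro i
    simp only [mode]
    split_ifs <;> simp_all
  have hcd : ∀ i j, mode i = PairMode.child j → d j < d i := by
    intro i j h
    obtain ⟨h1, rfl⟩ := (hmc i j).1 h
    exact (hp i h1).1
  have hms : ∀ i j, mode i = PairMode.matched j → mode j = PairMode.matched i := by
    intro i j h
    obtain ⟨h1, rfl⟩ := (hmm i j).1 h
    refine (hmm _ _).2 ⟨?_, hinv i⟩
    rw [hinv i]; exact h1.symm
  have hmd : ∀ i j, mode i = PairMode.matched j → d i = 0 := by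
    intro i j h
    exact hd0 i (Or.inl ((hmm i j).1 h).1)
  let f : PairingScheme n :=
    { mode := mode
      child_ne := by
        rintro i j h rfl
        exact lt_irrefl _ (hcd _ _ h)
      matched_ne := by
        intro i j h
        obtain ⟨h1, rfl⟩ := (hmm i j).1 h
        exact h1
      matched_symm := fun i j => ⟨hms i j, hms j i⟩
      no_mutual_child := by
        rintro i j _ ⟨h1, h2⟩
        exact lt_asymm (hcd _ _ h1) (hcd _ _ h2)
      acyclic := by
        apply acyclic_of_rank _ d
        have key : ∀ v a, (SimpleGraph.fromRel fun i j =>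
            mode i = PairMode.matched j ∨ mode i = PairMode.child j ∨
            mode j = PairMode.child i).Adj v a → d a ≤ d v →
            mode v = PairMode.matched a ∨ mode v = PairMode.child a := by
          intro v a h hle
          rw [SimpleGraph.fromRel_adj] at h
          rcases h.2 with (h | h | h) | (h | h | h)
          · exact Or.inl h
          · exact Or.inr h
          · exact absurd (hcd _ _ h) (by omega)
          · exact Or.inl (hms _ _ h)
          · exact absurd (hcd _ _ h) (by omega)
          · exact Or.inr h
        intro v a b ha hb hda hdb
        rcases key v a ha hda with h | h <;> rcases key v b hb hdb with h' | h' <;>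
          rw [h] at h' <;> simp at h' <;> exact h' }
  have hS : ∀ i, σ i ≠ i → (R i, R (σ i)) ∈ Sregion μ X γ Pmax i (σ i) :=
    fun i hi => ⟨hσ i hi, hQ _, hQ _⟩
  refine ⟨f, ⟨?_, ?_, ?_⟩, ?_⟩
  · intro i h
    exact (Qpow_mono hγ i (hmr i h).2).trans (hQ i)
  · intro i j h
    obtain ⟨h1, rfl⟩ := (hmc i j).1 h
    exact (Qpow_mono hγ i (hp i h1).2).trans (hQ i)
  · intro i j h
    obtain ⟨h1, rfl⟩ := (hmm i j).1 h
    exact ⟨_, hS i h1⟩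
  · rw [← sum_half σ hinv (fun i => Qpow γ i (R i))]
    unfold schemeCost
    refine Finset.sum_le_sum fun i _ => ?_
    unfold schemeContrib
    have hfi : f.mode i = mode i := rfl
    rw [hfi]
    cases h : mode i with
    | root =>
      obtain ⟨h1, h2⟩ := hmr i h
      have := Qpow_mono hγ i h2
      simp only [h1]; linarith
    | child j =>
      obtain ⟨h1, rfl⟩ := (hmc i j).1 h
      have h2 : σ i = i := by
        by_contra h'
        exact h1 (Or.inl h')
      have := Qpow_mono hγ i (hp i h1).2
      simp only [h2]; linarith
    | matched j =>
      obtain ⟨h1, rfl⟩ := (hmm i j).1 h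
      obtain ⟨_, _, _, hle⟩ := pairPower_attained μ X γ Pmax hγ i (σ i) ⟨_, hS i h1⟩
      have := hle _ (hS i h1)
      simp only at this ⊢
      linarith

end

instance PairMode.finite (n : ℕ) : Finite (PairMode n) := by
  refine Finite.of_injective (β := Option (Fin n ⊕ Fin n)) (fun m => match m with
    | PairMode.root => none
    | PairMode.child j => some (Sum.inl j)
    | PairMode.matched j => some (Sum.inr j)) ?_
  intro a b h
  cases a <;> cases b <;> simp_all

instance PairingScheme.finite (n : ℕ) : Finite (PairingScheme n) := by
  refine Finite.of_injective (β := Fin n → PairMode n) PairingScheme.mode ?_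
  intro a b h
  cases a; cases b; simp_all

/-- If some generalized pairwise valid rate assignment exists, then feasible pairing
schemes exist, and the set of achievable sum powers of generalized pairwise valid rate
assignments has a least element equal to the minimum cost over feasible schemes. -/
theorem minSumPower_eq_minSchemeCost
    {Ω S : Type*} [MeasurableSpace Ω] [MeasurableSpace S] [MeasurableSingletonClass S]
    (μ : Measure Ω) [IsProbabilityMeasure μ] {n : ℕ} (hn : 1 ≤ n)
    (X : Fin n → Ω → S) (hX : ∀ i, Measurable (X i))
    (hfin : ∀ i, (Set.range (X i)).Finite)
    (γ : Fin n → ℝ) (hγ : ∀ i, 0 < γ i) (Pmax : ℝ) (hP : 0 < Pmax)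
    (hex : ∃ R : Fin n → ℝ, GenPairwiseValid μ X γ Pmax R) :
    (∃ f : PairingScheme n, f.Feasible μ X γ Pmax) ∧
    ∃ m : ℝ,
      IsLeast {x : ℝ | ∃ R : Fin n → ℝ, GenPairwiseValid μ X γ Pmax R ∧
        x = ∑ i : Fin n, Qpow γ i (R i)} m ∧
      IsLeast {c : ℝ | ∃ f : PairingScheme n, f.Feasible μ X γ Pmax ∧
        c = schemeCost μ X γ Pmax f} m := by
  obtain ⟨R₀, hR₀⟩ := hex
  obtain ⟨f₀, hf₀, _⟩ := feasible_of_valid μ X γ Pmax hγ R₀ hR₀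
  refine ⟨⟨f₀, hf₀⟩, ?_⟩
  obtain ⟨f, hf, hmin⟩ := Set.exists_min_image
    {f : PairingScheme n | f.Feasible μ X γ Pmax} (schemeCost μ X γ Pmax)
    (Set.toFinite _) ⟨f₀, hf₀⟩
  obtain ⟨R, hR, hcost⟩ := valid_of_feasible μ X γ Pmax hγ f hf
  refine ⟨schemeCost μ X γ Pmax f, ⟨⟨R, hR, hcost⟩, ?_⟩, ⟨⟨f, hf, rfl⟩, ?_⟩⟩
  · rintro x ⟨R', hR', rfl⟩
    obtain ⟨f', hf', hle⟩ := feasible_of_valid μ X γ Pmax hγ R' hR'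
    exact (hmin f' hf').trans hle
  · rintro c ⟨f', hf', rfl⟩
    exact hmin f' hf'
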